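/- Let n be a positive integer and let α₁, α₂ be real parameters with α₁ ≥ 0 and α₂ > α₁ + 3n + 1. For G drawn from the real spherical ensemble of size 2n with parameters (α₁, α₂), and for every complex number z, ⟨det(z·I − G)·Tr(G)⟩ = −z^{2n−1}·(α₁+n)/(α₂ − (2n + α₁ + 1/2)). Consequently the odd-degree skew orthogonal polynomial Q_{2n+1}(z) := z·⟨det(z·I − G)⟩ + ⟨det(z·I − G)·Tr(G)⟩ equals z^{2n+1} − z^{2n−1}·(α₁+n)/(α₂ − (2n + α₁ + 1/2)). -/

import Mathlib

open MeasureTheory Matrix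

/-- The (unnormalized) density of the real spherical ensemble of size `N` with
parameters `(α₁, α₂)`: `det(Gᵀ G)^{α₁} det(I + Gᵀ G)^{-α₂}`. -/
noncomputable def sphericalRealWeight (N : ℕ) (α₁ α₂ : ℝ) (g : Fin N → Fin N → ℝ) : ℝ :=
  ((Matrix.of g)ᵀ * Matrix.of g).det ^ α₁ *
    (1 + (Matrix.of g)ᵀ * Matrix.of g).det ^ (-α₂)

/-- The determinant `det(I + Gᵀ G)` of a rectangular matrix `G`. -/
noncomputable def gramDet {m N : ℕ} (g : Fin m → Fin N → ℝ) : ℝ :=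
  (1 + (Matrix.of g)ᵀ * Matrix.of g).det

theorem posDef_one_add_gram {m N : ℕ} (g : Fin m → Fin N → ℝ) :
    (1 + (Matrix.of g)ᵀ * Matrix.of g).PosDef := by
  rw [← Matrix.conjTranspose_eq_transpose_of_trivial]
  exact Matrix.PosDef.one.add_posSemidef (Matrix.posSemidef_conjTranspose_mul_self _)

theorem gramDet_pos {m N : ℕ} (g : Fin m → Fin N → ℝ) : 0 < gramDet g :=
  (posDef_one_add_gram g).det_pos

theorem one_add_sum_le_prod_one_add_of_nonneg {ι : Type*} (s : Finset ι) (f : ι → ℝ)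
    (hf : ∀ i, 0 ≤ f i) : 1 + ∑ i ∈ s, f i ≤ ∏ i ∈ s, (1 + f i) := by
  classical
  induction s using Finset.induction_on with
  | empty => simp
  | insert a s ha ih =>
    rw [Finset.sum_insert ha, Finset.prod_insert ha]
    nlinarith [hf a, Finset.sum_nonneg (fun i (_ : i ∈ s) => hf i)]

theorem det_one_add_eq_prod_eigenvalues {ι : Type*} [Fintype ι] [DecidableEq ι]
    {A : Matrix ι ι ℝ} (hA : A.IsHermitian) : (1 + A).det = ∏ i, (1 + hA.eigenvalues i) := by
  have h := Matrix.eval_charpoly A (-1)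
  rw [hA.charpoly_eq, Polynomial.eval_prod] at h
  have h2 : Matrix.scalar ι (-1 : ℝ) - A = -(1 + A) := by
    rw [map_neg, map_one]; abel
  rw [h2, Matrix.det_neg] at h
  have h3 : ∏ i, Polynomial.eval (-1 : ℝ)
      (Polynomial.X - Polynomial.C ((hA.eigenvalues i : ℝ))) =
      (-1) ^ Fintype.card ι * ∏ i, (1 + hA.eigenvalues i) := by
    rw [← Finset.card_univ, ← Finset.prod_const, ← Finset.prod_mul_distrib]
    refine Finset.prod_congr rfl fun i _ => ?_
    simp
    ring
  have h4 := h3.symm.trans h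
  exact (mul_left_cancel₀ (pow_ne_zero _ (by norm_num)) h4).symm

theorem isHermitian_gram {m N : ℕ} (g : Fin m → Fin N → ℝ) :
    ((Matrix.of g)ᵀ * Matrix.of g).IsHermitian := by
  rw [← Matrix.conjTranspose_eq_transpose_of_trivial]
  exact (Matrix.posSemidef_conjTranspose_mul_self _).isHermitian

theorem eigenvalues_gram_nonneg {m N : ℕ} (g : Fin m → Fin N → ℝ) (i : Fin N) :
    0 ≤ (isHermitian_gram g).eigenvalues i := by
  have h := Matrix.posSemidef_conjTranspose_mul_self (Matrix.of g)
  rw [Matrix.conjTranspose_eq_transpose_of_trivial] at h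
  exact h.eigenvalues_nonneg i

theorem trace_gram {m N : ℕ} (g : Fin m → Fin N → ℝ) :
    ((Matrix.of g)ᵀ * Matrix.of g).trace = ∑ i, ∑ j, g i j ^ 2 := by
  simp only [Matrix.trace, Matrix.diag, Matrix.mul_apply, Matrix.transpose_apply, Matrix.of_apply]
  rw [Finset.sum_comm]
  simp only [pow_two]

theorem one_add_sum_sq_le_gramDet {m N : ℕ} (g : Fin m → Fin N → ℝ) :
    1 + ∑ i, ∑ j, g i j ^ 2 ≤ gramDet g := by
  rw [gramDet, det_one_add_eq_prod_eigenvalues (isHermitian_gram g), ← trace_gram,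
    (isHermitian_gram g).trace_eq_sum_eigenvalues]
  exact one_add_sum_le_prod_one_add_of_nonneg _ _ (eigenvalues_gram_nonneg g)

theorem one_le_gramDet {m N : ℕ} (g : Fin m → Fin N → ℝ) : 1 ≤ gramDet g :=
  le_trans (le_add_of_nonneg_right (by positivity)) (one_add_sum_sq_le_gramDet g)

theorem det_gram_le_gramDet {m N : ℕ} (g : Fin m → Fin N → ℝ) :
    ((Matrix.of g)ᵀ * Matrix.of g).det ≤ gramDet g := by
  rw [gramDet, det_one_add_eq_prod_eigenvalues (isHermitian_gram g),
    (isHermitian_gram g).det_eq_prod_eigenvalues]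
  exact Finset.prod_le_prod (fun i _ => eigenvalues_gram_nonneg g i) (fun i _ => by simp)

theorem abs_entry_le_gramDet_sqrt {m N : ℕ} (g : Fin m → Fin N → ℝ) (i : Fin m) (j : Fin N) :
    |g i j| ≤ √(gramDet g) := by
  refine Real.abs_le_sqrt (le_trans ?_ (one_add_sum_sq_le_gramDet g))
  have h1 : g i j ^ 2 ≤ ∑ j, g i j ^ 2 :=
    Finset.single_le_sum (f := fun j => g i j ^ 2) (fun _ _ => sq_nonneg _) (Finset.mem_univ j)
  have h2 : ∑ j, g i j ^ 2 ≤ ∑ i, ∑ j, g i j ^ 2 :=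
    Finset.single_le_sum (f := fun i => ∑ j, g i j ^ 2)
      (fun _ _ => Finset.sum_nonneg fun _ _ => sq_nonneg _) (Finset.mem_univ i)
  linarith

theorem abs_inv_one_add_gram_le_one {m N : ℕ} (g : Fin m → Fin N → ℝ) (i j : Fin N) :
    |(1 + (Matrix.of g)ᵀ * Matrix.of g : Matrix (Fin N) (Fin N) ℝ)⁻¹ i j| ≤ 1 := by
  set M := 1 + (Matrix.of g)ᵀ * Matrix.of g with hM
  have hu : IsUnit M.det := (posDef_one_add_gram g).det_pos.ne'.isUnit
  have hs : M⁻¹ᵀ = M⁻¹ := by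
    rw [Matrix.transpose_nonsing_inv, hM]; simp
  set R := M⁻¹ with hR
  have h1 : R = R * Rᵀ + (of g * R)ᵀ * (of g * R) := by
    have : R * M * R = R := by rw [hR, Matrix.nonsing_inv_mul _ hu, one_mul]
    rw [Matrix.transpose_mul, hs]
    calc R = R * M * R := this.symm
      _ = _ := by simp only [hM, mul_add, add_mul, mul_one, Matrix.mul_assoc]
  have h2 := congrFun (congrFun h1 i) i
  simp only [Matrix.add_apply, Matrix.mul_apply (M := R), Matrix.mul_apply (M := (of g * R)ᵀ),
    Matrix.transpose_apply] at h2
  have h3 : 0 ≤ ∑ x, (of g * R) x i * (of g * R) x i :=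
    Finset.sum_nonneg fun x _ => mul_self_nonneg _
  have h4 : ∀ k, R i k * R i k ≤ R i i := fun k => by
    have : R i k * R i k ≤ ∑ x, R i x * R i x :=
      Finset.single_le_sum (f := fun x => R i x * R i x)
        (fun _ _ => mul_self_nonneg _) (Finset.mem_univ k)
    linarith
  have h5 := h4 i
  have h6 : R i i ≤ 1 := by nlinarith
  exact abs_le_one_iff_mul_self_le_one.2 ((h4 j).trans h6)

/-- Appending one row `v` changes the Gram matrix by the rank-one term `v vᵀ`. -/
theorem gram_cons {m N : ℕ} (v : Fin N → ℝ) (g : Fin m → Fin N → ℝ) :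
    (Matrix.of (Fin.cons v g : Fin (m + 1) → Fin N → ℝ))ᵀ *
        Matrix.of (Fin.cons v g : Fin (m + 1) → Fin N → ℝ) =
      (Matrix.of g)ᵀ * Matrix.of g + Matrix.vecMulVec v v := by
  ext i j
  simp [Matrix.mul_apply, Fin.sum_univ_succ, Matrix.vecMulVec_apply, add_comm]

theorem det_add_vecMulVec_self {N : ℕ} (B : Matrix (Fin N) (Fin N) ℝ) (v : Fin N → ℝ) :
    ((Bᵀ * B)  + Matrix.vecMulVec (Bᵀ *ᵥ v) (Bᵀ *ᵥ v)).det = B.det ^ 2 * (1 + v ⬝ᵥ v) := by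
  have : (Bᵀ * B)  + Matrix.vecMulVec (Bᵀ *ᵥ v) (Bᵀ *ᵥ v) =
      Bᵀ * (1 + replicateCol Unit v * replicateRow Unit v) * B := by
    rw [mul_add, add_mul, mul_one, ← Matrix.vecMulVec_eq]
    congr 1
    rw [Matrix.mul_vecMulVec, Matrix.vecMulVec_mul, Matrix.mulVec_transpose]
  rw [this, det_mul, det_mul, det_one_add_replicateCol_mul_replicateRow, det_transpose]
  ring

theorem lintegral_one_add_dotProduct_rpow_lt_top {N : ℕ} {s : ℝ} (hs : (N : ℝ) / 2 < s) :
    ∫⁻ u : Fin N → ℝ, ENNReal.ofReal ((1 + u ⬝ᵥ u) ^ (-s)) < ⊤ := by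
  have h := integrable_rpow_neg_one_add_norm_sq (E := Fin N → ℝ) (μ := volume) (r := 2 * s)
    (by simp; linarith)
  have hs0 : 0 ≤ s := le_trans (by positivity) hs.le
  refine lt_of_le_of_lt (lintegral_mono fun u => ?_) h.lintegral_lt_top
  refine ENNReal.ofReal_le_ofReal ?_
  have e : -(2 * s) / 2 = -s := by ring
  rw [e]
  refine Real.rpow_le_rpow_of_nonpos (by positivity) ?_ (by linarith)
  have hn : ‖u‖ ≤ √(u ⬝ᵥ u) := by
    refine (pi_norm_le_iff_of_nonneg (Real.sqrt_nonneg _)).2 fun i => ?_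
    refine Real.abs_le_sqrt ?_
    rw [pow_two]
    exact Finset.single_le_sum (f := fun x => u x * u x)
        (fun _ _ => mul_self_nonneg _) (Finset.mem_univ i)
  have h0 : 0 ≤ u ⬝ᵥ u := Finset.sum_nonneg fun x _ => mul_self_nonneg _
  have := Real.sq_sqrt h0
  nlinarith [norm_nonneg u]

theorem lintegral_comp_mulVec {N : ℕ} (A : Matrix (Fin N) (Fin N) ℝ) (hA : A.det ≠ 0)
    {f : (Fin N → ℝ) → ENNReal} (hf : Measurable f) :
    ∫⁻ v, f v = ENNReal.ofReal |A.det| * ∫⁻ u, f (A *ᵥ u) := by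
  have h := Real.map_matrix_volume_pi_eq_smul_volume_pi hA
  have h1 : ∫⁻ u, f (A *ᵥ u) = ∫⁻ v, f v ∂(Measure.map (Matrix.toLin' A) volume) := by
    rw [lintegral_map hf (LinearMap.continuous_of_finiteDimensional _).measurable]
    simp
  rw [h1, h, lintegral_smul_measure, smul_eq_mul, ← mul_assoc, ← ENNReal.ofReal_mul (abs_nonneg _),
    ← abs_mul, mul_inv_cancel₀ hA]
  simp

open scoped MatrixOrder Matrix.Norms.L2Operator in
theorem Matrix.PosDef.exists_eq_transpose_mul_self {N : ℕ} {M : Matrix (Fin N) (Fin N) ℝ}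
    (hM : M.PosDef) : ∃ B : Matrix (Fin N) (Fin N) ℝ, M = Bᵀ * B := by
  obtain ⟨B, hB⟩ := CStarAlgebra.nonneg_iff_eq_star_mul_self.mp hM.posSemidef.nonneg
  exact ⟨B, by rw [hB, Matrix.star_eq_conjTranspose,
    Matrix.conjTranspose_eq_transpose_of_trivial]⟩

theorem lintegral_det_add_vecMulVec {N : ℕ} (s : ℝ) {M : Matrix (Fin N) (Fin N) ℝ}
    (hM : M.PosDef) :
    ∫⁻ v : Fin N → ℝ, ENNReal.ofReal ((M + Matrix.vecMulVec v v).det ^ (-s)) =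
      ENNReal.ofReal (M.det ^ (-(s - 1 / 2))) *
        ∫⁻ u : Fin N → ℝ, ENNReal.ofReal ((1 + u ⬝ᵥ u) ^ (-s)) := by
  obtain ⟨B, rfl⟩ := hM.exists_eq_transpose_mul_self
  have hdet : (Bᵀ * B).det = B.det ^ 2 := by rw [det_mul, det_transpose, pow_two]
  have hB : B.det ≠ 0 := fun h => by
    have := hM.det_pos
    rw [hdet, h] at this
    norm_num at this
  rw [lintegral_comp_mulVec Bᵀ (by rwa [det_transpose]), det_transpose]
  · simp_rw [det_add_vecMulVec_self]
    have e : ∀ u : Fin N → ℝ, ENNReal.ofReal ((B.det ^ 2 * (1 + u ⬝ᵥ u)) ^ (-s)) =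
        ENNReal.ofReal ((B.det ^ 2) ^ (-s)) * ENNReal.ofReal ((1 + u ⬝ᵥ u) ^ (-s)) := fun u => by
      have h0 : 0 ≤ u ⬝ᵥ u := Finset.sum_nonneg fun x _ => mul_self_nonneg _
      rw [Real.mul_rpow (sq_nonneg _) (by linarith), ENNReal.ofReal_mul (by positivity)]
    simp_rw [e]
    rw [lintegral_const_mul' _ _ ENNReal.ofReal_ne_top, ← mul_assoc,
      ← ENNReal.ofReal_mul (abs_nonneg _), hdet]
    congr 2
    rw [show -(s - 1 / 2) = 1 / 2 + -s by ring, Real.rpow_add (by positivity),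
      ← Real.sqrt_eq_rpow, Real.sqrt_sq_eq_abs]
  · refine ENNReal.measurable_ofReal.comp (Measurable.pow_const ?_ _)
    exact Continuous.measurable (by fun_prop)

theorem continuous_gramDet {m N : ℕ} :
    Continuous (gramDet : (Fin m → Fin N → ℝ) → ℝ) := by
  unfold gramDet
  have : Continuous fun g : Fin m → Fin N → ℝ => Matrix.of g := continuous_id
  fun_prop

theorem lintegral_gramDet_rpow_lt_top (m N : ℕ) (s : ℝ) (hs : ((N : ℝ) + m - 1) / 2 < s) :
    ∫⁻ g : Fin m → Fin N → ℝ, ENNReal.ofReal (gramDet g ^ (-s)) < ⊤ := by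
  induction m generalizing s with
  | zero =>
    rw [lintegral_unique]
    refine ENNReal.mul_lt_top ENNReal.ofReal_lt_top ?_
    rw [volume_pi, Measure.pi_of_empty]
    simp
  | succ m ih =>
    have hm := (volume_preserving_piFinSuccAbove (fun _ : Fin (m + 1) => Fin N → ℝ) 0).symm
    rw [← hm.lintegral_comp_emb (MeasurableEquiv.measurableEmbedding _)]
    push_cast at hs
    have hmeas : Measurable fun p : (Fin N → ℝ) × (Fin m → Fin N → ℝ) =>
        ENNReal.ofReal (gramDet ((MeasurableEquiv.piFinSuccAbove
          (fun _ : Fin (m + 1) => Fin N → ℝ) 0).symm p) ^ (-s)) :=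
      ENNReal.measurable_ofReal.comp ((continuous_gramDet.measurable.comp
        (MeasurableEquiv.measurable _)).pow_const _)
    rw [Measure.volume_eq_prod, lintegral_prod_symm' _ hmeas]
    have e : ∀ (g : Fin m → Fin N → ℝ) (v : Fin N → ℝ),
        gramDet ((MeasurableEquiv.piFinSuccAbove
          (fun _ : Fin (m + 1) => Fin N → ℝ) 0).symm (v, g)) =
        ((1 + (Matrix.of g)ᵀ * Matrix.of g) + Matrix.vecMulVec v v).det := fun g v => by
      have : (MeasurableEquiv.piFinSuccAbove
          (fun _ : Fin (m + 1) => Fin N → ℝ) 0).symm (v, g) = Fin.cons v g := by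
        simp [MeasurableEquiv.piFinSuccAbove, Fin.insertNthEquiv]
      rw [this, gramDet, gram_cons, add_assoc]
    simp_rw [e, lintegral_det_add_vecMulVec s (posDef_one_add_gram _)]
    have hC := lintegral_one_add_dotProduct_rpow_lt_top (N := N) (s := s)
      (by have : (0 : ℝ) ≤ m := m.cast_nonneg
          linarith)
    rw [lintegral_mul_const' _ _ hC.ne]
    exact ENNReal.mul_lt_top (ih (s - 1 / 2) (by linarith)) hC

theorem integrable_of_norm_le_gramDet_rpow {m N : ℕ} {E : Type*} [NormedAddCommGroup E]
    {s : ℝ} (hs : ((N : ℝ) + m - 1) / 2 < s) {F : (Fin m → Fin N → ℝ) → E}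
    (hF : AEStronglyMeasurable F) (C : ℝ) (h : ∀ g, ‖F g‖ ≤ C * gramDet g ^ (-s)) :
    Integrable F := by
  have h1 : Integrable fun g : Fin m → Fin N → ℝ => gramDet g ^ (-s) := by
    refine (lintegral_ofReal_ne_top_iff_integrable ?_ ?_).1
      (lintegral_gramDet_rpow_lt_top m N s hs).ne
    · exact (continuous_gramDet.measurable.pow_const _).aestronglyMeasurable
    · exact Filter.Eventually.of_forall fun g => (Real.rpow_pos_of_pos (gramDet_pos g) _).le
  exact (h1.const_mul C).mono' hF (Filter.Eventually.of_forall h)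

/-- **Jacobi's formula** for the derivative of a determinant. -/
theorem hasDerivAt_matrix_det {ι : Type*} [Fintype ι] [DecidableEq ι] {A : ℝ → Matrix ι ι ℝ}
    {A' : Matrix ι ι ℝ} {t : ℝ} (h : ∀ i j, HasDerivAt (fun s => A s i j) (A' i j) t) :
    HasDerivAt (fun s => (A s).det) ((A t).adjugate * A').trace t := by
  have h1 : HasDerivAt (fun s => ∑ σ : Equiv.Perm ι, ((Equiv.Perm.sign σ : ℤ) : ℝ) *
      ∏ i, A s (σ i) i)
      (∑ σ : Equiv.Perm ι, ((Equiv.Perm.sign σ : ℤ) : ℝ) *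
        ∑ i, (∏ j ∈ Finset.univ.erase i, A t (σ j) j) • A' (σ i) i) t :=
    HasDerivAt.fun_sum fun σ _ =>
      (HasDerivAt.fun_finsetProd fun i _ => h (σ i) i).const_mul _
  simp_rw [Matrix.det_apply']
  convert h1 using 1
  simp_rw [Finset.mul_sum]
  rw [Finset.sum_comm, Matrix.trace]
  refine Finset.sum_congr rfl fun i _ => ?_
  have h2 : ((A t).adjugate * A').diag i = ((A t).updateCol i fun k => A' k i).det := by
    rw [← Matrix.cramer_apply, Matrix.cramer_eq_adjugate_mulVec]
    rfl
  rw [h2, Matrix.det_apply']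
  refine Finset.sum_congr rfl fun σ _ => ?_
  rw [← Finset.mul_prod_erase _ _ (Finset.mem_univ i), Matrix.updateCol_self, smul_eq_mul,
    mul_comm (A' (σ i) i)]
  congr 2
  refine Finset.prod_congr rfl fun j hj => ?_
  rw [Matrix.updateCol_ne (Finset.ne_of_mem_erase hj)]

/-- The matrix unit with a one at position `(i, j)`, as an array. -/
noncomputable def unitArray {m N : ℕ} (i : Fin m) (j : Fin N) : Fin m → Fin N → ℝ :=
  Pi.single i (Pi.single j 1)

theorem of_unitArray {m N : ℕ} (i : Fin m) (j : Fin N) :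
    Matrix.of (unitArray i j) = Matrix.single i j 1 := by
  ext k l
  simp only [unitArray, Matrix.of_apply, Matrix.single_apply, Pi.single_apply]
  by_cases h1 : k = i <;> by_cases h2 : l = j <;> simp_all [eq_comm]

theorem hasDerivAt_entry {m N : ℕ} (g e : Fin m → Fin N → ℝ) (k : Fin m) (l : Fin N) :
    HasDerivAt (fun t : ℝ => (g + t • e) k l) (e k l) 0 := by
  simpa using ((hasDerivAt_id (0 : ℝ)).mul_const (e k l)).const_add (g k l)

theorem hasLineDerivAt_det {N : ℕ} (g : Fin N → Fin N → ℝ) (i j : Fin N) :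
    HasLineDerivAt ℝ (fun g : Fin N → Fin N → ℝ => (Matrix.of g).det)
      ((Matrix.of g).adjugate j i) g (unitArray i j) := by
  have h := hasDerivAt_matrix_det (A := fun t => Matrix.of (g + t • unitArray i j)) (t := 0)
    (A' := Matrix.of (unitArray i j)) (fun k l => hasDerivAt_entry g _ k l)
  rw [HasLineDerivAt]
  refine HasDerivAt.congr_deriv h ?_
  simp [of_unitArray, Matrix.trace_mul_single]

theorem hasLineDerivAt_gramDet {m N : ℕ} (g : Fin m → Fin N → ℝ) (i : Fin m) (j : Fin N) :
    HasLineDerivAt ℝ (gramDet : (Fin m → Fin N → ℝ) → ℝ)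
      (2 * gramDet g * (Matrix.of g * (1 + (Matrix.of g)ᵀ * Matrix.of g)⁻¹ : Matrix (Fin m) (Fin N) ℝ) i j)
      g (unitArray i j) := by
  set G := Matrix.of g with hG
  set E := Matrix.of (unitArray i j) with hE
  have h := hasDerivAt_matrix_det
    (A := fun t => 1 + (Matrix.of (g + t • unitArray i j))ᵀ * Matrix.of (g + t • unitArray i j))
    (t := 0) (A' := Eᵀ * G + Gᵀ * E) (fun k l => by
      simp only [Matrix.add_apply, Matrix.mul_apply, Matrix.transpose_apply]
      rw [← Finset.sum_add_distrib]
      refine (HasDerivAt.fun_sum fun r _ => ?_).const_add _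
      have := (hasDerivAt_entry g (unitArray i j) r k).mul (hasDerivAt_entry g (unitArray i j) r l)
      simpa [hG, hE, Pi.mul_def] using this)
  rw [HasLineDerivAt]
  refine HasDerivAt.congr_deriv h ?_
  simp only [zero_smul, add_zero, ← hG]
  set M := 1 + Gᵀ * G with hM
  have hadj : M.adjugate = gramDet g • M⁻¹ := by
    have hu : M.det ≠ 0 := (gramDet_pos g).ne'
    rw [Matrix.inv_def, smul_smul, Ring.inverse_eq_inv']
    change _ = (M.det * M.det⁻¹) • _
    rw [mul_inv_cancel₀ hu, one_smul]
  have hs : M⁻¹ᵀ = M⁻¹ := by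
    rw [Matrix.transpose_nonsing_inv, hM]; simp
  rw [hadj, Matrix.smul_mul, Matrix.trace_smul, mul_add, Matrix.trace_add]
  have h1 : (M⁻¹ * (Gᵀ * E)).trace = (G * M⁻¹) i j := by
    have h3 : M⁻¹ * Gᵀ = (G * M⁻¹)ᵀ := by rw [Matrix.transpose_mul, hs]
    rw [hE, of_unitArray, ← Matrix.mul_assoc, Matrix.trace_mul_single, h3]
    simp
  have h2 : (M⁻¹ * (Eᵀ * G)).trace = (M⁻¹ * (Gᵀ * E)).trace := by
    rw [← Matrix.trace_transpose, Matrix.transpose_mul, Matrix.transpose_mul, hs,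
      Matrix.transpose_transpose, Matrix.trace_mul_comm]
  rw [h2, h1, smul_eq_mul]
  ring

/-- The cubic vector field `G (1 + Gᵀ G)` on matrices. -/
noncomputable def cubicField {m N : ℕ} (g : Fin m → Fin N → ℝ) (i : Fin m) (j : Fin N) : ℝ :=
  (Matrix.of g * (1 + (Matrix.of g)ᵀ * Matrix.of g) : Matrix (Fin m) (Fin N) ℝ) i j

theorem cubicField_eq {m N : ℕ} (g : Fin m → Fin N → ℝ) (i : Fin m) (j : Fin N) :
    cubicField g i j = g i j + ∑ k, ∑ l, g i k * (g l k * g l j) := by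
  simp [cubicField, mul_add, Matrix.mul_apply, Finset.mul_sum, Finset.sum_add_distrib,
    Matrix.one_apply]

/-- The diagonal partial derivative of `cubicField`. -/
noncomputable def cubicFieldDeriv {m N : ℕ} (g : Fin m → Fin N → ℝ) (i : Fin m) (j : Fin N) : ℝ :=
  1 + ∑ l, g l j ^ 2 + g i j ^ 2 + ∑ k, g i k ^ 2

theorem hasLineDerivAt_cubicField {m N : ℕ} (g : Fin m → Fin N → ℝ) (i : Fin m) (j : Fin N) :
    HasLineDerivAt ℝ (fun g : Fin m → Fin N → ℝ => cubicField g i j)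
      (cubicFieldDeriv g i j) g (unitArray i j) := by
  simp_rw [cubicField_eq]
  rw [HasLineDerivAt]
  have h := (hasDerivAt_entry g (unitArray i j) i j).add
    (HasDerivAt.fun_sum (u := Finset.univ) fun k _ =>
      HasDerivAt.fun_sum (u := Finset.univ) fun l _ =>
      (hasDerivAt_entry g (unitArray i j) i k).mul
        ((hasDerivAt_entry g (unitArray i j) l k).mul (hasDerivAt_entry g (unitArray i j) l j)))
  refine HasDerivAt.congr_deriv h ?_
  have e : ∀ k l, unitArray i j k l = if k = i then (if l = j then 1 else 0) else 0 :=
    fun k l => by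
      by_cases h1 : k = i <;> by_cases h2 : l = j <;> simp [unitArray, h1, h2]
  simp only [cubicFieldDeriv, e, zero_smul, add_zero]
  simp [Finset.sum_add_distrib, mul_add, pow_two]
  ring

theorem sum_cubicFieldDeriv {N : ℕ} (g : Fin N → Fin N → ℝ) :
    ∑ i, ∑ j, cubicFieldDeriv g i j =
      (N : ℝ) ^ 2 + (2 * N + 1) * ∑ i, ∑ j, g i j ^ 2 := by
  have h : ∑ _i : Fin N, ∑ j, ∑ l, g l j ^ 2 = N * ∑ i, ∑ j, g i j ^ 2 := by
    rw [Finset.sum_comm (s := Finset.univ) (t := Finset.univ)]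
    rw [Finset.sum_comm (f := fun i j => g i j ^ 2)]
    simp [Finset.mul_sum]
  simp only [cubicFieldDeriv, Finset.sum_add_distrib, h]
  simp [← Finset.mul_sum]
  ring

theorem sum_cubicField_mul_adjugate {N : ℕ} (g : Fin N → Fin N → ℝ) :
    ∑ i, ∑ j, cubicField g i j * (Matrix.of g).adjugate j i =
      (Matrix.of g).det * (N + ∑ i, ∑ j, g i j ^ 2) := by
  set G := Matrix.of g with hG
  have h1 : ∑ i, ∑ j, cubicField g i j * G.adjugate j i =
      (G * (1 + Gᵀ * G) * G.adjugate).trace := by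
    simp [Matrix.trace, Matrix.mul_apply, cubicField, hG]
  rw [h1, Matrix.trace_mul_comm, ← Matrix.mul_assoc, Matrix.adjugate_mul, Matrix.smul_mul, one_mul,
    Matrix.trace_smul, Matrix.trace_add, hG, trace_gram]
  simp

theorem sum_cubicField_mul_inv {m N : ℕ} (g : Fin m → Fin N → ℝ) :
    ∑ i, ∑ j, cubicField g i j *
      (Matrix.of g * (1 + (Matrix.of g)ᵀ * Matrix.of g)⁻¹ : Matrix (Fin m) (Fin N) ℝ) i j = ∑ i, ∑ j, g i j ^ 2 := by
  set G := Matrix.of g with hG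
  set M := 1 + Gᵀ * G with hM
  have hu : IsUnit M.det := (gramDet_pos g).ne'.isUnit
  have hs : M⁻¹ᵀ = M⁻¹ := by
    rw [Matrix.transpose_nonsing_inv, hM]; simp
  have h1 : ∑ i, ∑ j, cubicField g i j * (G * M⁻¹) i j = (G * M * (G * M⁻¹)ᵀ).trace := by
    rw [Matrix.trace]
    refine Finset.sum_congr rfl fun i _ => ?_
    rw [Matrix.diag, Matrix.mul_apply]
    rfl
  rw [h1, Matrix.transpose_mul, hs, ← Matrix.mul_assoc, Matrix.mul_assoc G,
    Matrix.mul_nonsing_inv _ hu, Matrix.mul_one, Matrix.trace_mul_comm, hG, trace_gram]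

theorem integral_hasLineDerivAt_eq_zero {m N : ℕ} {f f' : (Fin m → Fin N → ℝ) → ℝ}
    {v : Fin m → Fin N → ℝ} (hf : Integrable f) (hf' : Integrable f')
    (h : ∀ x, HasLineDerivAt ℝ f (f' x) x v) : ∫ x, f' x = 0 := by
  have := integral_bilinear_hasLineDerivAt_right_eq_neg_left_of_integrable
    (μ := (volume : Measure (Fin m → Fin N → ℝ)))
    (f := f) (f' := f') (g := fun _ => (1 : ℝ)) (g' := fun _ => (0 : ℝ)) (v := v)
    (B := ContinuousLinearMap.mul ℝ ℝ) (by simpa using hf') (by simp) (by simpa using hf)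
    (fun x _ => h x) (fun x _ => by
      rw [HasLineDerivAt]; exact hasDerivAt_const _ _)
  simpa using this

theorem one_le_sqrt_gramDet {m N : ℕ} (g : Fin m → Fin N → ℝ) : 1 ≤ √(gramDet g) :=
  Real.one_le_sqrt.2 (one_le_gramDet g)

theorem sum_sq_le_gramDet {m N : ℕ} (g : Fin m → Fin N → ℝ) :
    ∑ i, ∑ j, g i j ^ 2 ≤ gramDet g := by
  linarith [one_add_sum_sq_le_gramDet g]

theorem abs_cubicField_le {m N : ℕ} (g : Fin m → Fin N → ℝ) (i : Fin m) (j : Fin N) :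
    |cubicField g i j| ≤ (1 + N * m) * √(gramDet g) ^ 3 := by
  have hq := one_le_sqrt_gramDet g
  have he := abs_entry_le_gramDet_sqrt g
  rw [cubicField_eq]
  set q := √(gramDet g)
  have h1 : |∑ k, ∑ l, g i k * (g l k * g l j)| ≤ ∑ _k : Fin N, ∑ _l : Fin m, q * (q * q) := by
    refine (Finset.abs_sum_le_sum_abs _ _).trans (Finset.sum_le_sum fun k _ => ?_)
    refine (Finset.abs_sum_le_sum_abs _ _).trans (Finset.sum_le_sum fun l _ => ?_)
    rw [abs_mul, abs_mul]
    gcongr <;> apply he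
  simp only [Finset.sum_const, Finset.card_univ, Fintype.card_fin, nsmul_eq_mul] at h1
  have h2 : q ≤ q ^ 3 := le_self_pow₀ hq (by norm_num)
  calc _ ≤ |g i j| + |∑ k, ∑ l, g i k * (g l k * g l j)| := abs_add_le _ _
    _ ≤ q ^ 3 + N * (m * (q * (q * q))) := add_le_add ((he i j).trans h2) h1
    _ = _ := by ring

theorem abs_cubicFieldDeriv_le {m N : ℕ} (g : Fin m → Fin N → ℝ) (i : Fin m) (j : Fin N) :
    |cubicFieldDeriv g i j| ≤ 3 * √(gramDet g) ^ 2 := by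
  rw [Real.sq_sqrt (gramDet_pos g).le]
  have h := one_add_sum_sq_le_gramDet g
  have h1 : ∑ k, g i k ^ 2 ≤ ∑ i, ∑ j, g i j ^ 2 :=
    Finset.single_le_sum (f := fun i => ∑ j, g i j ^ 2)
      (fun _ _ => Finset.sum_nonneg fun _ _ => sq_nonneg _) (Finset.mem_univ i)
  have h2 : g i j ^ 2 ≤ ∑ k, g i k ^ 2 :=
    Finset.single_le_sum (f := fun j => g i j ^ 2) (fun _ _ => sq_nonneg _) (Finset.mem_univ j)
  have h3 : ∑ l, g l j ^ 2 ≤ ∑ i, ∑ j, g i j ^ 2 :=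
    Finset.sum_le_sum fun l _ => Finset.single_le_sum (f := fun j => g l j ^ 2)
      (fun _ _ => sq_nonneg _) (Finset.mem_univ j)
  have h4 : 0 ≤ cubicFieldDeriv g i j := by unfold cubicFieldDeriv; positivity
  have := one_le_gramDet g
  rw [abs_of_nonneg h4, cubicFieldDeriv]
  linarith

theorem abs_adjugate_le {N : ℕ} (g : Fin N → Fin N → ℝ) (i j : Fin N) :
    |(Matrix.of g).adjugate i j| ≤ N.factorial * √(gramDet g) ^ N := by
  rw [Matrix.adjugate_apply]
  have h := Matrix.det_le (A := (Matrix.of g).updateRow j (Pi.single i 1))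
    (abv := AbsoluteValue.abs) (x := √(gramDet g)) (fun k l => by
      rw [Matrix.updateRow_apply]
      split_ifs
      · rw [Pi.single_apply]
        split_ifs
        · simpa using one_le_gramDet g
        · simp
      · exact abs_entry_le_gramDet_sqrt g k l)
  simpa using h

theorem abs_mul_inv_le {m N : ℕ} (g : Fin m → Fin N → ℝ) (i : Fin m) (j : Fin N) :
    |(Matrix.of g * (1 + (Matrix.of g)ᵀ * Matrix.of g)⁻¹ : Matrix (Fin m) (Fin N) ℝ) i j| ≤
      N * √(gramDet g) := by
  rw [Matrix.mul_apply]
  refine (Finset.abs_sum_le_sum_abs _ _).trans ?_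
  calc _ ≤ ∑ _k : Fin N, √(gramDet g) * 1 := by
        refine Finset.sum_le_sum fun k _ => ?_
        rw [abs_mul]
        gcongr
        · exact abs_entry_le_gramDet_sqrt g i k
        · exact abs_inv_one_add_gram_le_one g k j
    _ = _ := by simp

theorem integrable_of_norm_le_sqrt_gramDet_pow {N : ℕ} {E : Type*} [NormedAddCommGroup E]
    {a b : ℝ} (d : ℕ) (hab : a + d / 2 + N - 1 / 2 < b) {F : (Fin N → Fin N → ℝ) → E}
    (hF : AEStronglyMeasurable F) (K : ℝ)
    (hK : ∀ g, ‖F g‖ ≤ K * (√(gramDet g) ^ d * (gramDet g ^ a * gramDet g ^ (-b)))) :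
    Integrable F := by
  refine integrable_of_norm_le_gramDet_rpow (s := b - a - d / 2) (by linarith) hF K fun g => ?_
  refine (hK g).trans_eq ?_
  congr 1
  rw [Real.sqrt_eq_rpow, ← Real.rpow_natCast, ← Real.rpow_mul (gramDet_pos g).le,
    ← Real.rpow_add (gramDet_pos g), ← Real.rpow_add (gramDet_pos g)]
  congr 1
  ring

theorem continuous_matrix_of {m N : ℕ} :
    Continuous fun g : Fin m → Fin N → ℝ => Matrix.of g := continuous_id

theorem continuous_cubicField {m N : ℕ} (i : Fin m) (j : Fin N) :
    Continuous fun g : Fin m → Fin N → ℝ => cubicField g i j := by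
  simp_rw [cubicField_eq]
  fun_prop

theorem continuous_mul_inv {m N : ℕ} :
    Continuous fun g : Fin m → Fin N → ℝ =>
      (Matrix.of g * (1 + (Matrix.of g)ᵀ * Matrix.of g)⁻¹ : Matrix (Fin m) (Fin N) ℝ) := by
  have h := continuous_matrix_of (m := m) (N := N)
  simp_rw [Matrix.inv_def, Ring.inverse_eq_inv']
  refine h.matrix_mul (Continuous.smul (Continuous.inv₀ (continuous_gramDet) fun g =>
    (gramDet_pos g).ne') ?_)
  exact (continuous_const.add (h.matrix_transpose.matrix_mul h)).matrix_adjugate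

theorem continuous_gramDet_rpow {m N : ℕ} (b : ℝ) :
    Continuous fun g : Fin m → Fin N → ℝ => gramDet g ^ b :=
  continuous_gramDet.rpow_const fun g => Or.inl (gramDet_pos g).ne'

/-- The divergence theorem for the field `cubicField` weighted by
`h(det G) det(I + Gᵀ G)^{-b}`. -/
theorem integral_divergence_eq_zero {N : ℕ} (hN : 0 < N) {a b : ℝ}
    (hab : a + 3 * N / 2 + 1 < b) {h h' : ℝ → ℝ} (hd : ∀ x, HasDerivAt h (h' x) x)
    (hc : Continuous h') {C : ℝ} (hC : 0 ≤ C)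
    (hb : ∀ g : Fin N → Fin N → ℝ, |h (Matrix.of g).det| ≤ C * gramDet g ^ a)
    (hb' : ∀ g : Fin N → Fin N → ℝ, |h' (Matrix.of g).det| ≤ C * gramDet g ^ a) :
    ∫ g : Fin N → Fin N → ℝ,
      (((N : ℝ) ^ 2 + (2 * N + 1) * ∑ i, ∑ j, g i j ^ 2) * h (Matrix.of g).det +
        h' (Matrix.of g).det * ((Matrix.of g).det * (N + ∑ i, ∑ j, g i j ^ 2)) -
        2 * b * (∑ i, ∑ j, g i j ^ 2) * h (Matrix.of g).det) * gramDet g ^ (-b) = 0 := by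
  have hch : Continuous h := continuous_iff_continuousAt.2 fun x => (hd x).continuousAt
  have hof := continuous_matrix_of (m := N) (N := N)
  have hdet : Continuous fun g : Fin N → Fin N → ℝ => (Matrix.of g).det := hof.matrix_det
  set R : (Fin N → Fin N → ℝ) → Matrix (Fin N) (Fin N) ℝ := fun g =>
    Matrix.of g * (1 + (Matrix.of g)ᵀ * Matrix.of g)⁻¹ with hR
  set P : Fin N → Fin N → (Fin N → Fin N → ℝ) → ℝ := fun i j g =>
    cubicFieldDeriv g i j * h (Matrix.of g).det +
    cubicField g i j * (h' (Matrix.of g).det * (Matrix.of g).adjugate j i) +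
    cubicField g i j * h (Matrix.of g).det * (-2 * b * R g i j) with hP
  have hline : ∀ i j g, HasLineDerivAt ℝ
      (fun g : Fin N → Fin N → ℝ => cubicField g i j * h (Matrix.of g).det * gramDet g ^ (-b))
      (P i j g * gramDet g ^ (-b)) g (unitArray i j) := by
    intro i j g
    have h1 := hasLineDerivAt_cubicField g i j
    have h2 := hasLineDerivAt_det g i j
    have h3 := hasLineDerivAt_gramDet g i j
    rw [HasLineDerivAt] at h1 h2 h3 ⊢
    have h2' := HasDerivAt.comp (0 : ℝ) (by simpa using hd (Matrix.of g).det) h2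
    have h3' := h3.rpow_const (p := -b) (Or.inl (by simpa using (gramDet_pos g).ne'))
    refine ((h1.mul h2').mul h3').congr_deriv ?_
    simp only [zero_smul, add_zero, Function.comp, Pi.mul_apply, hP, hR]
    rw [Real.rpow_sub_one (gramDet_pos g).ne']
    have := (gramDet_pos g).ne'
    field_simp
  have hCD : Continuous fun g : Fin N → Fin N → ℝ => gramDet g ^ (-b) := continuous_gramDet_rpow _
  have hPc : ∀ i j, Continuous (P i j) := by
    intro i j
    have c1 : Continuous fun g : Fin N → Fin N → ℝ => cubicFieldDeriv g i j := by
      unfold cubicFieldDeriv; fun_prop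
    have c2 := continuous_cubicField (m := N) (N := N) i j
    have c3 : Continuous fun g : Fin N → Fin N → ℝ => (Matrix.of g).adjugate j i :=
      hof.matrix_adjugate.matrix_elem j i
    have c4 : Continuous fun g : Fin N → Fin N → ℝ => R g i j :=
      continuous_mul_inv.matrix_elem i j
    have c5 := hch.comp hdet
    have c6 := hc.comp hdet
    exact ((c1.mul c5).add (c2.mul (c6.mul c3))).add ((c2.mul c5).mul (continuous_const.mul c4))
  have hNr : (1 : ℝ) ≤ N := by exact_mod_cast hN
  have hint : ∀ i j, Integrable fun g : Fin N → Fin N → ℝ =>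
      cubicField g i j * h (Matrix.of g).det * gramDet g ^ (-b) := by
    intro i j
    refine integrable_of_norm_le_sqrt_gramDet_pow (a := a) (b := b) 3
      (by push_cast; linarith)
      (((continuous_cubicField i j).mul (hch.comp hdet)).mul hCD).aestronglyMeasurable
      ((1 + N * N) * C) fun g => ?_
    rw [norm_mul, norm_mul, Real.norm_eq_abs, Real.norm_eq_abs,
      Real.norm_of_nonneg (Real.rpow_nonneg (gramDet_pos g).le _)]
    have hr := Real.rpow_nonneg (gramDet_pos g).le (-b)
    calc _ ≤ ((1 + N * N) * √(gramDet g) ^ 3) * (C * gramDet g ^ a) * gramDet g ^ (-b) := by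
          gcongr
          · exact abs_cubicField_le g i j
          · exact hb g
      _ = _ := by ring
  have hint' : ∀ i j, Integrable fun g : Fin N → Fin N → ℝ => P i j g * gramDet g ^ (-b) := by
    intro i j
    refine integrable_of_norm_le_sqrt_gramDet_pow (a := a) (b := b) (N + 3)
      (by push_cast; linarith)
      ((hPc i j).mul hCD).aestronglyMeasurable
      (3 * C + (1 + N * N) * C * N.factorial + (1 + N * N) * C * (2 * |b| * N)) fun g => ?_
    rw [norm_mul, Real.norm_eq_abs,
      Real.norm_of_nonneg (Real.rpow_nonneg (gramDet_pos g).le _), ← mul_assoc, ← mul_assoc]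
    have hr := Real.rpow_nonneg (gramDet_pos g).le (-b)
    have ha := Real.rpow_nonneg (gramDet_pos g).le a
    refine mul_le_mul_of_nonneg_right ?_ hr
    have hq := one_le_sqrt_gramDet g
    have e1 := abs_cubicFieldDeriv_le g i j
    have e2 := abs_cubicField_le g i j
    have e3 := abs_adjugate_le g j i
    have e4 : |R g i j| ≤ N * √(gramDet g) := abs_mul_inv_le g i j
    set q := √(gramDet g)
    set A := gramDet g ^ a
    have p2 : q ^ 2 ≤ q ^ (N + 3) := pow_le_pow_right₀ hq (by omega)
    have p4 : q ^ 4 ≤ q ^ (N + 3) := pow_le_pow_right₀ hq (by omega)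
    have t1 : |cubicFieldDeriv g i j * h (Matrix.of g).det| ≤ 3 * q ^ (N + 3) * (C * A) := by
      rw [abs_mul]
      gcongr
      · linarith
      · exact hb g
    have t2 : |cubicField g i j * (h' (Matrix.of g).det * (Matrix.of g).adjugate j i)| ≤
        ((1 + N * N) * q ^ 3) * ((C * A) * (N.factorial * q ^ N)) := by
      rw [abs_mul, abs_mul]
      gcongr
      exact hb' g
    have t3 : |cubicField g i j * h (Matrix.of g).det * (-2 * b * R g i j)| ≤
        ((1 + N * N) * C * A * (2 * |b| * N)) * q ^ (N + 3) := by
      rw [abs_mul, abs_mul, abs_mul, abs_mul]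
      calc _ ≤ ((1 + N * N) * q ^ 3) * (C * A) * (|(-2 : ℝ)| * |b| * (N * q)) := by
            gcongr
            exact hb g
        _ = ((1 + N * N) * C * A * (2 * |b| * N)) * q ^ 4 := by
            rw [abs_neg, abs_two]; ring
        _ ≤ _ := by gcongr
    calc |P i j g| ≤ _ := (abs_add_le _ _).trans (add_le_add_left (abs_add_le _ _) _)
      _ ≤ _ := add_le_add (add_le_add t1 t2) t3
      _ = _ := by ring
  have hzero : ∀ i j, ∫ g, P i j g * gramDet g ^ (-b) = 0 := fun i j =>
    integral_hasLineDerivAt_eq_zero (hint i j) (hint' i j) (hline i j)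
  have hsum : ∫ g, ∑ i, ∑ j, P i j g * gramDet g ^ (-b) = 0 := by
    rw [integral_finsetSum _ fun i _ => integrable_finsetSum _ fun j _ => hint' i j]
    refine Finset.sum_eq_zero fun i _ => ?_
    rw [integral_finsetSum _ fun j _ => hint' i j]
    exact Finset.sum_eq_zero fun j _ => hzero i j
  rw [← hsum]
  congr 1
  funext g
  simp_rw [← Finset.sum_mul]
  congr 1
  simp only [hP, Finset.sum_add_distrib]
  have s1 : ∑ i, ∑ j, cubicFieldDeriv g i j * h (Matrix.of g).det =
      ((N : ℝ) ^ 2 + (2 * N + 1) * ∑ i, ∑ j, g i j ^ 2) * h (Matrix.of g).det := by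
    simp_rw [← Finset.sum_mul, sum_cubicFieldDeriv]
  have s2 : ∑ i, ∑ j, cubicField g i j * (h' (Matrix.of g).det * (Matrix.of g).adjugate j i) =
      h' (Matrix.of g).det * ((Matrix.of g).det * (N + ∑ i, ∑ j, g i j ^ 2)) := by
    rw [← sum_cubicField_mul_adjugate]
    simp_rw [Finset.mul_sum]
    exact Finset.sum_congr rfl fun i _ => Finset.sum_congr rfl fun j _ => by ring
  have s3 : ∑ i, ∑ j, cubicField g i j * h (Matrix.of g).det * (-2 * b * R g i j) =
      -(2 * b * (∑ i, ∑ j, g i j ^ 2) * h (Matrix.of g).det) := by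
    rw [← sum_cubicField_mul_inv, Finset.mul_sum, Finset.sum_mul, ← Finset.sum_neg_distrib]
    simp_rw [Finset.mul_sum, Finset.sum_mul, ← Finset.sum_neg_distrib]
    exact Finset.sum_congr rfl fun i _ => Finset.sum_congr rfl fun j _ => by
      simp only [hR]; ring
  rw [s1, s2, s3]
  ring

theorem sphericalRealWeight_eq {N : ℕ} (a b : ℝ) (g : Fin N → Fin N → ℝ) :
    sphericalRealWeight N a b g = ((Matrix.of g).det ^ 2) ^ a * gramDet g ^ (-b) := by
  rw [sphericalRealWeight, gramDet, Matrix.det_mul, Matrix.det_transpose, pow_two]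

theorem det_sq_le_gramDet {N : ℕ} (g : Fin N → Fin N → ℝ) :
    (Matrix.of g).det ^ 2 ≤ gramDet g := by
  have := det_gram_le_gramDet g
  rwa [Matrix.det_mul, Matrix.det_transpose, ← pow_two] at this

theorem continuous_sphericalRealWeight {N : ℕ} {a : ℝ} (b : ℝ) (ha : 0 ≤ a) :
    Continuous (sphericalRealWeight N a b) := by
  have : sphericalRealWeight N a b = fun g => ((Matrix.of g).det ^ 2) ^ a * gramDet g ^ (-b) :=
    funext (sphericalRealWeight_eq a b)
  rw [this]
  exact ((continuous_matrix_of.matrix_det.pow 2).rpow_const fun _ => Or.inr ha).mul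
    (continuous_gramDet_rpow _)

theorem sphericalRealWeight_nonneg {N : ℕ} (a b : ℝ) (g : Fin N → Fin N → ℝ) :
    0 ≤ sphericalRealWeight N a b g := by
  rw [sphericalRealWeight_eq]
  have := gramDet_pos g
  positivity

theorem integrable_sphericalRealWeight_smul {N : ℕ} {E : Type*} [NormedAddCommGroup E]
    [NormedSpace ℝ E] {a b : ℝ} (ha : 0 ≤ a) (d : ℕ) (hab : a + d / 2 + N - 1 / 2 < b)
    {F : (Fin N → Fin N → ℝ) → E} (hF : Continuous F) (K : ℝ)
    (hK : ∀ g, ‖F g‖ ≤ K * √(gramDet g) ^ d) :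
    Integrable fun g => sphericalRealWeight N a b g • F g := by
  refine integrable_of_norm_le_sqrt_gramDet_pow d hab
    ((continuous_sphericalRealWeight b ha).smul hF).aestronglyMeasurable K fun g => ?_
  rw [norm_smul, Real.norm_of_nonneg (sphericalRealWeight_nonneg a b g), sphericalRealWeight_eq]
  have h0 := Real.rpow_nonneg (gramDet_pos g).le (-b)
  have h1 := Real.rpow_nonneg (gramDet_pos g).le a
  have h2 : 0 ≤ K * √(gramDet g) ^ d := (norm_nonneg _).trans (hK g)
  calc _ ≤ gramDet g ^ a * gramDet g ^ (-b) * (K * √(gramDet g) ^ d) := by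
        have := (gramDet_pos g).le
        gcongr
        · exact det_sq_le_gramDet g
        · exact hK g
    _ = _ := by ring

theorem integral_sphericalRealWeight_pos {N : ℕ} {a b : ℝ} (ha : 0 ≤ a)
    (hab : a + N - 1 / 2 < b) : 0 < ∫ g, sphericalRealWeight N a b g := by
  have hi := integrable_sphericalRealWeight_smul (N := N) ha 0 (by simpa using hab)
    (F := fun _ => (1 : ℝ)) continuous_const 1 (by simp)
  simp only [smul_eq_mul, mul_one] at hi
  rw [integral_pos_iff_support_of_nonneg (sphericalRealWeight_nonneg a b) hi]
  have ho : IsOpen (Function.support (sphericalRealWeight N a b)) :=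
    (continuous_sphericalRealWeight b ha).isOpen_support
  refine ho.measure_pos volume ⟨Matrix.of.symm 1, ?_⟩
  rw [Function.mem_support, sphericalRealWeight_eq]
  have := gramDet_pos (Matrix.of.symm (1 : Matrix (Fin N) (Fin N) ℝ))
  simp
  positivity

theorem hasDerivAt_sq_add_rpow {a e : ℝ} (he : 0 < e) (x : ℝ) :
    HasDerivAt (fun x : ℝ => (x ^ 2 + e) ^ a) (2 * a * x * (x ^ 2 + e) ^ (a - 1)) x := by
  have h := ((hasDerivAt_pow 2 x).add_const e).rpow_const (p := a) (Or.inl (by positivity))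
  exact h.congr_deriv (by simp only [Nat.cast_ofNat, Nat.reduceSub]; ring)

theorem continuous_sq_add_rpow {e : ℝ} (he : 0 < e) (p : ℝ) :
    Continuous fun x : ℝ => (x ^ 2 + e) ^ p :=
  Continuous.rpow_const (by fun_prop) fun x => Or.inl (by positivity)

theorem det_sq_add_rpow_le {N : ℕ} {a e : ℝ} (ha : 0 ≤ a) (he : 0 < e) (he1 : e ≤ 1)
    (g : Fin N → Fin N → ℝ) :
    ((Matrix.of g).det ^ 2 + e) ^ a ≤ 2 ^ a * gramDet g ^ a := by
  rw [← Real.mul_rpow (by norm_num) (gramDet_pos g).le]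
  refine Real.rpow_le_rpow (by positivity) ?_ ha
  linarith [det_sq_le_gramDet g, one_le_gramDet g]

theorem sq_mul_sq_add_rpow_le {a e : ℝ} (he : 0 < e) (x : ℝ) :
    x ^ 2 * (x ^ 2 + e) ^ (a - 1) ≤ (x ^ 2 + e) ^ a := by
  rw [Real.rpow_sub_one (by positivity), mul_div_assoc', div_le_iff₀ (by positivity), mul_comm]
  gcongr
  linarith

theorem integral_regularized_divergence_eq_zero {N : ℕ} (hN : 0 < N) {a b e : ℝ} (ha : 0 ≤ a)
    (hab : a + 3 * N / 2 + 1 < b) (he : 0 < e) (he1 : e ≤ 1) :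
    ∫ g : Fin N → Fin N → ℝ,
      (((N : ℝ) ^ 2 + (2 * N + 1) * ∑ i, ∑ j, g i j ^ 2) * ((Matrix.of g).det ^ 2 + e) ^ a +
        2 * a * ((Matrix.of g).det ^ 2 * ((Matrix.of g).det ^ 2 + e) ^ (a - 1)) *
          (N + ∑ i, ∑ j, g i j ^ 2) -
        2 * b * (∑ i, ∑ j, g i j ^ 2) * ((Matrix.of g).det ^ 2 + e) ^ a) *
        gramDet g ^ (-b) = 0 := by
  have h2 : (0 : ℝ) < 2 ^ a := by positivity
  have key : ∀ x : ℝ, |2 * a * x * (x ^ 2 + e) ^ (a - 1)| ≤ (2 * a / e) * (x ^ 2 + e) ^ a := by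
    intro x
    have hx : 0 < x ^ 2 + e := by positivity
    have hx' : |x| * e ≤ x ^ 2 + e := by
      have := sq_abs x
      nlinarith [sq_nonneg (|x| - 1), abs_nonneg x, sq_nonneg (|x| - e)]
    rw [abs_mul, abs_mul, abs_of_nonneg (by positivity : 0 ≤ 2 * a),
      abs_of_pos (Real.rpow_pos_of_pos hx _), Real.rpow_sub_one hx.ne', div_mul_eq_mul_div,
      mul_assoc, mul_div_assoc]
    gcongr 2 * a * ?_
    rw [mul_div_assoc', div_le_div_iff₀ hx he]
    have := Real.rpow_pos_of_pos hx a
    nlinarith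
  have := integral_divergence_eq_zero hN hab (hasDerivAt_sq_add_rpow he)
    (by have := continuous_sq_add_rpow he (a - 1); fun_prop)
    (C := max 1 (2 * a / e) * 2 ^ a) (by positivity)
    (fun g => by
      rw [abs_of_nonneg (by positivity)]
      refine (det_sq_add_rpow_le ha he he1 g).trans ?_
      have := Real.rpow_nonneg (gramDet_pos g).le a
      gcongr
      exact le_mul_of_one_le_left h2.le (le_max_left _ _))
    (fun g => by
      refine (key _).trans ?_
      rw [mul_assoc]
      refine mul_le_mul (le_max_right _ _) (det_sq_add_rpow_le ha he he1 g) (by positivity)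
        (by positivity))
  rw [← this]
  congr 1
  funext g
  ring

/-- The second moment identity for the real spherical ensemble. -/
theorem integral_sphericalRealWeight_mul_sum_sq {N : ℕ} (hN : 0 < N) {a b : ℝ} (ha : 0 ≤ a)
    (hab : a + 3 * N / 2 + 1 < b) :
    (2 * b - 2 * a - 2 * N - 1) *
      ∫ g, sphericalRealWeight N a b g * ∑ i, ∑ j, g i j ^ 2 =
      N * (N + 2 * a) * ∫ g, sphericalRealWeight N a b g := by
  have hNr : (1 : ℝ) ≤ N := by exact_mod_cast hN
  have hi := integrable_sphericalRealWeight_smul (N := N) (b := b) ha 0 (by simp; linarith)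
    (F := fun _ => (1 : ℝ)) continuous_const 1 (by simp)
  have hiT := integrable_sphericalRealWeight_smul (N := N) (b := b) ha 2
    (by push_cast; linarith)
    (F := fun g => ∑ i, ∑ j, g i j ^ 2) (by fun_prop) 1 (fun g => by
      rw [Real.sq_sqrt (gramDet_pos g).le, one_mul, Real.norm_of_nonneg (by positivity)]
      exact sum_sq_le_gramDet g)
  simp only [smul_eq_mul, mul_one] at hi hiT
  have hlim : Filter.Tendsto (fun k : ℕ => ∫ g : Fin N → Fin N → ℝ,
      (((N : ℝ) ^ 2 + (2 * N + 1) * ∑ i, ∑ j, g i j ^ 2) *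
          ((Matrix.of g).det ^ 2 + 1 / ((k : ℝ) + 1)) ^ a +
        2 * a * ((Matrix.of g).det ^ 2 *
          ((Matrix.of g).det ^ 2 + 1 / ((k : ℝ) + 1)) ^ (a - 1)) *
          (N + ∑ i, ∑ j, g i j ^ 2) -
        2 * b * (∑ i, ∑ j, g i j ^ 2) * ((Matrix.of g).det ^ 2 + 1 / ((k : ℝ) + 1)) ^ a) *
        gramDet g ^ (-b)) Filter.atTop
      (nhds (∫ g : Fin N → Fin N → ℝ,
        (((N : ℝ) ^ 2 + (2 * N + 1) * ∑ i, ∑ j, g i j ^ 2) * ((Matrix.of g).det ^ 2) ^ a +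
        2 * a * ((Matrix.of g).det ^ 2) ^ a * (N + ∑ i, ∑ j, g i j ^ 2) -
        2 * b * (∑ i, ∑ j, g i j ^ 2) * ((Matrix.of g).det ^ 2) ^ a) * gramDet g ^ (-b))) := by
    have he : ∀ k : ℕ, 0 < 1 / ((k : ℝ) + 1) := fun k => by positivity
    have he1 : ∀ k : ℕ, 1 / ((k : ℝ) + 1) ≤ 1 := fun k => by
      rw [div_le_one (by positivity)]; linarith [k.cast_nonneg (α := ℝ)]
    have hdet : Continuous fun g : Fin N → Fin N → ℝ => (Matrix.of g).det :=
      continuous_matrix_of.matrix_det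
    have hCD : Continuous fun g : Fin N → Fin N → ℝ => gramDet g ^ (-b) :=
      continuous_gramDet_rpow _
    refine tendsto_integral_of_dominated_convergence
      (fun g => ((N : ℝ) ^ 2 + (2 * N + 1) + 2 * a * (N + 1) + 2 * |b|) * 2 ^ a *
        (√(gramDet g) ^ 2 * (gramDet g ^ a * gramDet g ^ (-b)))) (fun k => ?_) ?_ (fun k => ?_) ?_
    · have c1 := (continuous_sq_add_rpow (he k) a).comp hdet
      have c2 := (continuous_sq_add_rpow (he k) (a - 1)).comp hdet
      simp only [Function.comp_def] at c1 c2
      exact Continuous.aestronglyMeasurable (by fun_prop)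
    · refine integrable_of_norm_le_sqrt_gramDet_pow (a := a) (b := b) 2
        (by push_cast; linarith) ?_ (((N : ℝ) ^ 2 + (2 * N + 1) + 2 * a * (N + 1) + 2 * |b|) * 2 ^ a)
        fun g => ?_
      · have := continuous_gramDet_rpow (m := N) (N := N) a
        have := continuous_gramDet (m := N) (N := N)
        exact Continuous.aestronglyMeasurable (by fun_prop)
      · have := gramDet_pos g
        rw [Real.norm_of_nonneg (by positivity)]
    · refine Filter.Eventually.of_forall fun g => ?_
      have hD := gramDet_pos g
      have hD1 := one_le_gramDet g
      rw [Real.sq_sqrt hD.le, norm_mul, Real.norm_of_nonneg (Real.rpow_nonneg hD.le _)]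
      rw [← mul_assoc (gramDet g), ← mul_assoc _ (gramDet g * gramDet g ^ a)]
      refine mul_le_mul_of_nonneg_right ?_ (Real.rpow_nonneg hD.le _)
      have hT := sum_sq_le_gramDet g
      have hT0 : 0 ≤ ∑ i, ∑ j, g i j ^ 2 := by positivity
      have hH := det_sq_add_rpow_le ha (he k) (he1 k) g
      have hH0 : 0 ≤ ((Matrix.of g).det ^ 2 + 1 / ((k : ℝ) + 1)) ^ a := by positivity
      have hJ := (sq_mul_sq_add_rpow_le (a := a) (he k) (Matrix.of g).det).trans hH
      have hJ0 : 0 ≤ (Matrix.of g).det ^ 2 *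
          ((Matrix.of g).det ^ 2 + 1 / ((k : ℝ) + 1)) ^ (a - 1) := by positivity
      have hA : 0 ≤ gramDet g ^ a := Real.rpow_nonneg hD.le _
      have h2a : (0 : ℝ) ≤ 2 ^ a := by positivity
      generalize ((Matrix.of g).det ^ 2 + 1 / ((k : ℝ) + 1)) ^ a = H at *
      generalize (Matrix.of g).det ^ 2 *
          ((Matrix.of g).det ^ 2 + 1 / ((k : ℝ) + 1)) ^ (a - 1) = J at *
      generalize ∑ i, ∑ j, g i j ^ 2 = T at *
      generalize gramDet g = D at *
      have t1 : |((N : ℝ) ^ 2 + (2 * N + 1) * T) * H| ≤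
          ((N : ℝ) ^ 2 * D + (2 * N + 1) * D) * (2 ^ a * D ^ a) := by
        rw [abs_of_nonneg (by positivity)]
        gcongr
        exact le_mul_of_one_le_right (by positivity) hD1
      have t2 : |2 * a * J * (N + T)| ≤ 2 * a * (2 ^ a * D ^ a) * (N * D + D) := by
        rw [abs_of_nonneg (by positivity)]
        gcongr
        exact le_mul_of_one_le_right (by positivity) hD1
      have t3 : |2 * b * T * H| ≤ 2 * |b| * D * (2 ^ a * D ^ a) := by
        rw [abs_mul, abs_mul, abs_mul, abs_two, abs_of_nonneg hT0, abs_of_nonneg hH0]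
        gcongr
      calc _ ≤ _ := (abs_sub _ _).trans (add_le_add_left (abs_add_le _ _) _)
        _ ≤ _ := add_le_add (add_le_add t1 t2) t3
        _ = _ := by ring
    · refine Filter.Eventually.of_forall fun g => ?_
      have l0 : Filter.Tendsto (fun k : ℕ => (Matrix.of g).det ^ 2 + 1 / ((k : ℝ) + 1))
          Filter.atTop (nhds ((Matrix.of g).det ^ 2)) := by
        simpa using (tendsto_one_div_add_atTop_nhds_zero_nat (𝕜 := ℝ)).const_add
          ((Matrix.of g).det ^ 2)
      have l1 := l0.rpow_const (p := a) (Or.inr ha)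
      have l2 : Filter.Tendsto (fun k : ℕ => 2 * a * ((Matrix.of g).det ^ 2 *
          ((Matrix.of g).det ^ 2 + 1 / ((k : ℝ) + 1)) ^ (a - 1)))
          Filter.atTop (nhds (2 * a * ((Matrix.of g).det ^ 2) ^ a)) := by
        by_cases hx : (Matrix.of g).det = 0
        · rcases ha.eq_or_lt with rfl | ha'
          · simp
          · simp [hx, Real.zero_rpow ha'.ne']
        · have hx2 : (Matrix.of g).det ^ 2 ≠ 0 := pow_ne_zero _ hx
          have l3 := ((l0.rpow_const (p := a - 1) (Or.inl hx2)).const_mul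
            ((Matrix.of g).det ^ 2)).const_mul (2 * a)
          rwa [Real.rpow_sub_one hx2, mul_div_cancel₀ _ hx2] at l3
      exact (((l1.const_mul _).add (l2.mul_const _)).sub (l1.const_mul _)).mul_const _
  have hzero : ∀ k : ℕ, _ = (0 : ℝ) := fun k => integral_regularized_divergence_eq_zero hN ha hab
    (e := 1 / ((k : ℝ) + 1)) (by positivity)
    (by rw [div_le_one (by positivity)]; linarith [k.cast_nonneg (α := ℝ)])
  simp_rw [hzero] at hlim
  have h0 := tendsto_nhds_unique hlim tendsto_const_nhds
  have h1 : ∫ g : Fin N → Fin N → ℝ,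
      ((N * (N + 2 * a)) * sphericalRealWeight N a b g - (2 * b - 2 * a - 2 * N - 1) *
        (sphericalRealWeight N a b g * ∑ i, ∑ j, g i j ^ 2)) = 0 := by
    rw [← h0]
    congr 1
    funext g
    rw [sphericalRealWeight_eq]
    ring
  rw [integral_sub (hi.const_mul _) (hiT.const_mul _), integral_const_mul, integral_const_mul] at h1
  linarith

theorem sphericalRealWeight_congr {N : ℕ} (a b : ℝ) {g h : Fin N → Fin N → ℝ}
    (hgh : ∀ i j, ∑ k, g k i * g k j = ∑ k, h k i * h k j) :
    sphericalRealWeight N a b g = sphericalRealWeight N a b h := by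
  have : (Matrix.of g)ᵀ * Matrix.of g = (Matrix.of h)ᵀ * Matrix.of h := by
    ext i j
    simpa [Matrix.mul_apply] using hgh i j
  simp only [sphericalRealWeight, this]

/-- Change the sign of the `i`-th row. -/
def negRow {N : ℕ} (i : Fin N) (g : Fin N → Fin N → ℝ) : Fin N → Fin N → ℝ :=
  fun k => (if k = i then Neg.neg else id) (g k)

theorem negRow_self {N : ℕ} (i : Fin N) (g : Fin N → Fin N → ℝ) : negRow i g i = -g i := by
  simp [negRow]

theorem negRow_of_ne {N : ℕ} {i k : Fin N} (h : k ≠ i) (g : Fin N → Fin N → ℝ) :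
    negRow i g k = g k := by
  simp [negRow, h]

theorem negRow_involutive {N : ℕ} (i : Fin N) : Function.Involutive (negRow (N := N) i) := by
  intro g
  funext k
  by_cases h : k = i
  · subst h; simp [negRow_self]
  · simp [negRow_of_ne h]

theorem measurePreserving_negRow {N : ℕ} (i : Fin N) :
    MeasurePreserving (negRow (N := N) i) := by
  refine volume_preserving_pi fun k => ?_
  split_ifs
  · exact Measure.measurePreserving_neg _
  · exact MeasurePreserving.id _

theorem sphericalRealWeight_negRow {N : ℕ} (a b : ℝ) (i : Fin N) (g : Fin N → Fin N → ℝ) :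
    sphericalRealWeight N a b (negRow i g) = sphericalRealWeight N a b g := by
  refine sphericalRealWeight_congr a b fun p q => Finset.sum_congr rfl fun k _ => ?_
  by_cases h : k = i
  · subst h; simp [negRow_self]
  · simp [negRow_of_ne h]

theorem integral_sphericalRealWeight_smul_negRow {N : ℕ} {E : Type*} [NormedAddCommGroup E]
    [NormedSpace ℝ E] (a b : ℝ) (i : Fin N) (F : (Fin N → Fin N → ℝ) → E) :
    ∫ g, sphericalRealWeight N a b g • F (negRow i g) =
      ∫ g, sphericalRealWeight N a b g • F g := by
  have hm := measurePreserving_negRow i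
  have he : MeasurableEmbedding (negRow i) :=
    (MeasurableEquiv.ofInvolutive _ (negRow_involutive i) hm.measurable).measurableEmbedding
  rw [← hm.integral_comp he fun g => sphericalRealWeight N a b g • F g]
  simp only [sphericalRealWeight_negRow]

theorem integral_sphericalRealWeight_smul_perm {N : ℕ} {E : Type*} [NormedAddCommGroup E]
    [NormedSpace ℝ E] (a b : ℝ) (σ : Equiv.Perm (Fin N)) (F : (Fin N → Fin N → ℝ) → E) :
    ∫ g, sphericalRealWeight N a b g • F (fun k => g (σ k)) =
      ∫ g, sphericalRealWeight N a b g • F g := by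
  have hm := volume_measurePreserving_piCongrLeft (fun _ : Fin N => Fin N → ℝ) σ.symm
  have hp : ∀ g : Fin N → Fin N → ℝ,
      MeasurableEquiv.piCongrLeft (fun _ : Fin N => Fin N → ℝ) σ.symm g = fun k => g (σ k) := by
    intro g
    funext k
    rw [MeasurableEquiv.coe_piCongrLeft]
    simpa using Equiv.piCongrLeft_apply_apply (fun _ : Fin N => Fin N → ℝ) σ.symm g (σ k)
  have hw : ∀ g : Fin N → Fin N → ℝ, sphericalRealWeight N a b (fun k => g (σ k)) =
      sphericalRealWeight N a b g := fun g => sphericalRealWeight_congr a b fun p q =>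
    Equiv.sum_comp σ fun k => g k p * g k q
  rw [← hm.integral_comp' fun g => sphericalRealWeight N a b g • F g]
  simp only [hp, hw]

/-- The matrix `z I - G` with the rows of `G` outside `S` replaced by zero. -/
def truncatedCharmatrix {N : ℕ} (z : ℂ) (S : Finset (Fin N)) (g : Fin N → Fin N → ℝ) :
    Matrix (Fin N) (Fin N) ℂ :=
  z • (1 : Matrix (Fin N) (Fin N) ℂ) -
    (Matrix.of fun k => if k ∈ S then g k else 0).map ((↑) : ℝ → ℂ)

theorem truncatedCharmatrix_insert {N : ℕ} (z : ℂ) {S : Finset (Fin N)} {i : Fin N}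
    (hi : i ∉ S) (g : Fin N → Fin N → ℝ) :
    truncatedCharmatrix z (insert i S) g = (truncatedCharmatrix z S g).updateRow i
      (z • (1 : Matrix (Fin N) (Fin N) ℂ) i - fun l => (g i l : ℂ)) := by
  ext k l
  by_cases h : k = i
  · subst h; simp [truncatedCharmatrix]
  · simp [truncatedCharmatrix, h]

theorem truncatedCharmatrix_negRow {N : ℕ} (z : ℂ) {S : Finset (Fin N)} {i : Fin N}
    (hi : i ∉ S) (g : Fin N → Fin N → ℝ) :
    truncatedCharmatrix z S (negRow i g) = truncatedCharmatrix z S g := by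
  ext k l
  by_cases h : k = i
  · subst h; simp [truncatedCharmatrix, hi]
  · simp [truncatedCharmatrix, negRow_of_ne h]

theorem det_truncatedCharmatrix_insert_add_negRow {N : ℕ} (z : ℂ) {S : Finset (Fin N)}
    {i : Fin N} (hi : i ∉ S) (g : Fin N → Fin N → ℝ) :
    (truncatedCharmatrix z (insert i S) (negRow i g)).det +
      (truncatedCharmatrix z (insert i S) g).det = 2 * (truncatedCharmatrix z S g).det := by
  rw [truncatedCharmatrix_insert z hi, truncatedCharmatrix_insert z hi,
    truncatedCharmatrix_negRow z hi, ← Matrix.det_updateRow_add]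
  have : (z • (1 : Matrix (Fin N) (Fin N) ℂ) i - fun l => ((negRow i g i l : ℝ) : ℂ)) +
      (z • (1 : Matrix (Fin N) (Fin N) ℂ) i - fun l => (g i l : ℂ)) =
      (2 : ℂ) • truncatedCharmatrix z S g i := by
    funext l
    simp [truncatedCharmatrix, hi, negRow_self]
    ring
  rw [this, Matrix.det_updateRow_smul, Matrix.updateRow_eq_self]

theorem det_truncatedCharmatrix_empty {N : ℕ} (z : ℂ) (g : Fin N → Fin N → ℝ) :
    (truncatedCharmatrix z ∅ g).det = z ^ N := by
  have : truncatedCharmatrix z ∅ g = z • (1 : Matrix (Fin N) (Fin N) ℂ) := by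
    ext; simp [truncatedCharmatrix]
  simp [this]

theorem det_truncatedCharmatrix_singleton {N : ℕ} (z : ℂ) (j : Fin N)
    (g : Fin N → Fin N → ℝ) :
    (truncatedCharmatrix z {j} g).det = z ^ (N - 1) * (z - g j j) := by
  have h0 : truncatedCharmatrix z ∅ g = z • (1 : Matrix (Fin N) (Fin N) ℂ) := by
    ext; simp [truncatedCharmatrix]
  rw [← insert_empty_eq, truncatedCharmatrix_insert z (Finset.notMem_empty j), h0,
    ← Matrix.cramer_transpose_apply, Matrix.cramer_eq_adjugate_mulVec, Matrix.transpose_smul,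
    Matrix.transpose_one, Matrix.adjugate_smul, Matrix.adjugate_one, Matrix.smul_mulVec,
    Matrix.one_mulVec]
  simp

theorem norm_det_truncatedCharmatrix_le {N : ℕ} (z : ℂ) (S : Finset (Fin N))
    (g : Fin N → Fin N → ℝ) :
    ‖(truncatedCharmatrix z S g).det‖ ≤
      N.factorial * (‖z‖ + 1) ^ N * √(gramDet g) ^ N := by
  have h1 := one_le_sqrt_gramDet g
  have hx : ∀ i j, NormedField.toAbsoluteValue ℂ (truncatedCharmatrix z S g i j) ≤
      (‖z‖ + 1) * √(gramDet g) := by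
    intro i j
    have e1 : ‖z • (1 : Matrix (Fin N) (Fin N) ℂ) i j‖ ≤ ‖z‖ := by
      by_cases h : i = j
      · subst h; simp
      · simp [h]
    have e2 : ‖(((if i ∈ S then g i else 0) j : ℝ) : ℂ)‖ ≤ √(gramDet g) := by
      split_ifs
      · simpa using abs_entry_le_gramDet_sqrt g i j
      · simp
    calc ‖truncatedCharmatrix z S g i j‖ ≤ ‖z‖ + √(gramDet g) :=
          (norm_sub_le _ _).trans (add_le_add e1 e2)
      _ ≤ _ := by nlinarith [norm_nonneg z]
  have := Matrix.det_le hx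
  rwa [Fintype.card_fin, nsmul_eq_mul, mul_pow, ← mul_assoc] at this

theorem continuous_det_truncatedCharmatrix {N : ℕ} (z : ℂ) (S : Finset (Fin N)) :
    Continuous fun g => (truncatedCharmatrix z S g).det := by
  refine Continuous.matrix_det (continuous_matrix fun i j => ?_)
  by_cases h : i ∈ S
  · simp only [truncatedCharmatrix, Matrix.sub_apply, Matrix.map_apply, Matrix.of_apply, h,
      if_true]
    fun_prop
  · simp only [truncatedCharmatrix, Matrix.sub_apply, Matrix.map_apply, Matrix.of_apply, h,
      if_false]
    fun_prop

theorem integrable_sphericalRealWeight_smul_det {N : ℕ} {a b : ℝ} (ha : 0 ≤ a) (d : ℕ)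
    (hab : a + (N + d) / 2 + N - 1 / 2 < b) (z : ℂ) (S : Finset (Fin N))
    {φ : (Fin N → Fin N → ℝ) → ℂ} (hφ : Continuous φ) (hφd : ∀ g, ‖φ g‖ ≤ √(gramDet g) ^ d) :
    Integrable fun g =>
      sphericalRealWeight N a b g • ((truncatedCharmatrix z S g).det * φ g) := by
  refine integrable_sphericalRealWeight_smul ha (N + d) (by push_cast; linarith)
    ((continuous_det_truncatedCharmatrix z S).mul hφ) (N.factorial * (‖z‖ + 1) ^ N) fun g => ?_
  rw [norm_mul, pow_add, ← mul_assoc]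
  exact mul_le_mul (norm_det_truncatedCharmatrix_le z S g) (hφd g) (norm_nonneg _)
    (by positivity)

theorem integral_det_truncatedCharmatrix_union {N : ℕ} {a b : ℝ} (ha : 0 ≤ a) (d : ℕ)
    (hab : a + (N + d) / 2 + N - 1 / 2 < b) (z : ℂ) (S : Finset (Fin N))
    {φ : (Fin N → Fin N → ℝ) → ℂ} (hφ : Continuous φ) (hφd : ∀ g, ‖φ g‖ ≤ √(gramDet g) ^ d)
    (hS : ∀ i ∉ S, ∀ g, φ (negRow i g) = φ g) (T : Finset (Fin N)) (hT : Disjoint T S) :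
    ∫ g, sphericalRealWeight N a b g • ((truncatedCharmatrix z (T ∪ S) g).det * φ g) =
      ∫ g, sphericalRealWeight N a b g • ((truncatedCharmatrix z S g).det * φ g) := by
  induction T using Finset.induction_on with
  | empty => simp
  | insert i T hiT ih =>
    rw [Finset.disjoint_insert_left] at hT
    rw [← ih hT.2, Finset.insert_union]
    have hi : i ∉ T ∪ S := by simp [hiT, hT.1]
    have hI := fun U => integrable_sphericalRealWeight_smul_det ha d hab z U hφ hφd
    have hflip := integral_sphericalRealWeight_smul_negRow a b i fun g =>
      (truncatedCharmatrix z (insert i (T ∪ S)) g).det * φ g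
    have hsum : ∀ g, sphericalRealWeight N a b g •
        ((truncatedCharmatrix z (insert i (T ∪ S)) (negRow i g)).det * φ (negRow i g)) =
        (2 : ℂ) • sphericalRealWeight N a b g • ((truncatedCharmatrix z (T ∪ S) g).det * φ g) -
        sphericalRealWeight N a b g •
          ((truncatedCharmatrix z (insert i (T ∪ S)) g).det * φ g) := by
      intro g
      rw [hS i hT.1, eq_sub_of_add_eq (det_truncatedCharmatrix_insert_add_negRow z hi g)]
      simp only [Complex.real_smul, smul_eq_mul]
      ring
    simp_rw [hsum] at hflip
    have hI2 : Integrable fun g => (2 : ℂ) • sphericalRealWeight N a b g •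
        ((truncatedCharmatrix z (T ∪ S) g).det * φ g) :=
      (hI (T ∪ S)).smul (2 : ℂ)
    rw [integral_sub hI2 (hI _), integral_smul, smul_eq_mul] at hflip
    linear_combination (-1 / 2 : ℂ) * hflip

theorem integral_det_truncatedCharmatrix_univ {N : ℕ} {a b : ℝ} (ha : 0 ≤ a) (d : ℕ)
    (hab : a + (N + d) / 2 + N - 1 / 2 < b) (z : ℂ) (S : Finset (Fin N))
    {φ : (Fin N → Fin N → ℝ) → ℂ} (hφ : Continuous φ) (hφd : ∀ g, ‖φ g‖ ≤ √(gramDet g) ^ d)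
    (hS : ∀ i ∉ S, ∀ g, φ (negRow i g) = φ g) :
    ∫ g, sphericalRealWeight N a b g • ((truncatedCharmatrix z Finset.univ g).det * φ g) =
      ∫ g, sphericalRealWeight N a b g • ((truncatedCharmatrix z S g).det * φ g) := by
  rw [← integral_det_truncatedCharmatrix_union ha d hab z S hφ hφd hS Sᶜ disjoint_compl_left,
    Finset.union_comm, Finset.union_compl]

theorem integral_det_mul_diagonal {N : ℕ} {a b : ℝ} (ha : 0 ≤ a)
    (hab : a + 3 * N / 2 + 1 < b) (z : ℂ) (j : Fin N) :
    ∫ g, sphericalRealWeight N a b g •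
      ((truncatedCharmatrix z Finset.univ g).det * (g j j : ℂ)) =
      -z ^ (N - 1) * (∫ g, sphericalRealWeight N a b g * g j j ^ 2 : ℝ) := by
  have hN : (1 : ℝ) ≤ N := by exact_mod_cast j.pos
  have hb : ∀ g : Fin N → Fin N → ℝ, ‖g j j‖ ≤ √(gramDet g) :=
    fun g => abs_entry_le_gramDet_sqrt g j j
  rw [integral_det_truncatedCharmatrix_univ ha 1 (by push_cast; linarith) z {j}
    (φ := fun g => (g j j : ℂ)) (by fun_prop) (fun g => by simpa using hb g)
    (fun i hi g => by rw [negRow_of_ne (by simpa [eq_comm] using hi)])]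
  have h1 := integrable_sphericalRealWeight_smul (N := N) (b := b) ha 1
    (by push_cast; linarith) (F := fun g => g j j) (by fun_prop) 1 (fun g => by simpa using hb g)
  have h2 := integrable_sphericalRealWeight_smul (N := N) (b := b) ha 2
    (by push_cast; linarith) (F := fun g => g j j ^ 2) (by fun_prop) 1 (fun g => by
      rw [norm_pow, one_mul]
      gcongr
      exact hb g)
  have h0 : ∫ g, sphericalRealWeight N a b g • g j j = 0 := by
    have := integral_sphericalRealWeight_smul_negRow a b j fun g => g j j
    simp only [negRow_self, Pi.neg_apply, smul_neg, integral_neg] at this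
    linarith
  simp only [smul_eq_mul] at h0 h1 h2
  have he : ∀ g, sphericalRealWeight N a b g •
      ((truncatedCharmatrix z {j} g).det * (g j j : ℂ)) =
      z ^ (N - 1) * z * ((sphericalRealWeight N a b g * g j j : ℝ) : ℂ) -
        z ^ (N - 1) * ((sphericalRealWeight N a b g * g j j ^ 2 : ℝ) : ℂ) := by
    intro g
    rw [det_truncatedCharmatrix_singleton, Complex.real_smul]
    push_cast
    ring
  simp_rw [he]
  rw [integral_sub (h1.ofReal.const_mul _) (h2.ofReal.const_mul _), integral_const_mul,
    integral_const_mul, integral_complex_ofReal, integral_complex_ofReal, h0]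
  simp

theorem natCast_mul_sum_integral_diagonal_sq {N : ℕ} (hN : 0 < N) {a b : ℝ} (ha : 0 ≤ a)
    (hab : a + 3 * N / 2 + 1 < b) :
    N * ∑ j, ∫ g, sphericalRealWeight N a b g * g j j ^ 2 =
      ∫ g, sphericalRealWeight N a b g * ∑ i, ∑ j, g i j ^ 2 := by
  have hNr : (1 : ℝ) ≤ N := by exact_mod_cast hN
  have hI : ∀ i j, Integrable fun g => sphericalRealWeight N a b g * g i j ^ 2 := fun i j =>
    integrable_sphericalRealWeight_smul (N := N) (b := b) ha 2
      (by push_cast; linarith) (F := fun g => g i j ^ 2) (by fun_prop) 1 (fun g => by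
        rw [norm_pow, one_mul]
        gcongr
        exact abs_entry_le_gramDet_sqrt g i j)
  have hs : ∀ i j, ∫ g, sphericalRealWeight N a b g * g i j ^ 2 =
      ∫ g, sphericalRealWeight N a b g * g j j ^ 2 := by
    intro i j
    have := integral_sphericalRealWeight_smul_perm a b (Equiv.swap i j) fun g => g j j ^ 2
    simpa using this
  have he : ∀ g : Fin N → Fin N → ℝ, sphericalRealWeight N a b g * ∑ i, ∑ j, g i j ^ 2 =
      ∑ i, ∑ j, sphericalRealWeight N a b g * g i j ^ 2 := by
    intro g
    simp_rw [Finset.mul_sum]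
  simp_rw [he]
  rw [integral_finsetSum _ fun i _ => integrable_finsetSum _ fun j _ => hI i j]
  have hr : ∀ i, ∫ g, ∑ j, sphericalRealWeight N a b g * g i j ^ 2 =
      ∑ j, ∫ g, sphericalRealWeight N a b g * g j j ^ 2 := by
    intro i
    rw [integral_finsetSum _ fun j _ => hI i j]
    exact Finset.sum_congr rfl fun j _ => hs i j
  simp [hr]

theorem integral_det_mul_trace {N : ℕ} (hN : 0 < N) {a b : ℝ} (ha : 0 ≤ a)
    (hab : a + 3 * N / 2 + 1 < b) (z : ℂ) :
    ∫ g, sphericalRealWeight N a b g •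
      ((truncatedCharmatrix z Finset.univ g).det * ((Matrix.of g).trace : ℂ)) =
      -z ^ (N - 1) * (((N + 2 * a) / (2 * b - 2 * a - 2 * N - 1) *
        ∫ g, sphericalRealWeight N a b g : ℝ) : ℂ) := by
  have hNr : (1 : ℝ) ≤ N := by exact_mod_cast hN
  have hsum : ∀ g, sphericalRealWeight N a b g •
      ((truncatedCharmatrix z Finset.univ g).det * ((Matrix.of g).trace : ℂ)) =
      ∑ j, sphericalRealWeight N a b g •
        ((truncatedCharmatrix z Finset.univ g).det * (g j j : ℂ)) := by
    intro g
    simp [Matrix.trace, Finset.mul_sum]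
  simp_rw [hsum]
  rw [integral_finsetSum _ fun j _ => integrable_sphericalRealWeight_smul_det ha 1
    (by push_cast; linarith) z Finset.univ (φ := fun g => (g j j : ℂ)) (by fun_prop)
    (fun g => by simpa using abs_entry_le_gramDet_sqrt g j j)]
  simp_rw [integral_det_mul_diagonal ha hab]
  rw [← Finset.mul_sum, ← Complex.ofReal_sum]
  congr 2
  have h1 := natCast_mul_sum_integral_diagonal_sq hN ha hab
  have h2 := integral_sphericalRealWeight_mul_sum_sq hN ha hab
  have h3 : 0 < 2 * b - 2 * a - 2 * N - 1 := by linarith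
  rw [← h1] at h2
  rw [div_mul_eq_mul_div, eq_div_iff h3.ne']
  have h4 : (N : ℝ) ≠ 0 := by positivity
  apply mul_left_cancel₀ h4
  linear_combination h2

theorem integral_det {N : ℕ} {a b : ℝ} (ha : 0 ≤ a)
    (hab : a + 3 * N / 2 + 1 < b) (z : ℂ) :
    ∫ g, sphericalRealWeight N a b g • (truncatedCharmatrix z Finset.univ g).det =
      z ^ N * ((∫ g, sphericalRealWeight N a b g : ℝ) : ℂ) := by
  have hN : (0 : ℝ) ≤ N := N.cast_nonneg
  have := integral_det_truncatedCharmatrix_univ (N := N) (b := b) ha 0 (by push_cast; linarith) z ∅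
    (φ := fun _ => 1) continuous_const (by simp) (fun _ _ _ => rfl)
  simp only [mul_one] at this
  rw [this]
  simp_rw [det_truncatedCharmatrix_empty, Complex.real_smul]
  rw [integral_mul_const, integral_complex_ofReal, mul_comm]

/-- For the real spherical ensemble of size `2n` with parameters `(α₁, α₂)`:
`⟨det (z I - G) Tr G⟩ = -z^(2n-1) (α₁+n)/(α₂ - (2n + α₁ + 1/2))`, and consequently the
odd-degree skew orthogonal polynomial `Q_{2n+1}(z) = z ⟨det (z I - G)⟩ + ⟨det (z I - G) Tr G⟩`
equals `z^(2n+1) - z^(2n-1) (α₁+n)/(α₂ - (2n + α₁ + 1/2))`. -/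
theorem realSpherical_odd_skew_orthogonal_poly (n : ℕ) (hn : 0 < n)
    (α₁ α₂ : ℝ) (hα₁ : 0 ≤ α₁) (hα₂ : α₁ + 3 * n + 1 < α₂) (z : ℂ) :
    (∫ g : Fin (2 * n) → Fin (2 * n) → ℝ,
          (sphericalRealWeight (2 * n) α₁ α₂ g : ℂ) *
            ((z • (1 : Matrix (Fin (2 * n)) (Fin (2 * n)) ℂ)
              - (Matrix.of g).map ((↑) : ℝ → ℂ)).det * ((Matrix.of g).trace : ℂ))) /
        ((∫ g : Fin (2 * n) → Fin (2 * n) → ℝ, sphericalRealWeight (2 * n) α₁ α₂ g : ℝ) : ℂ)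
      = -z ^ (2 * n - 1) *
          (((α₁ + n) / (α₂ - (2 * n + α₁ + 1 / 2)) : ℝ) : ℂ) ∧
    z * ((∫ g : Fin (2 * n) → Fin (2 * n) → ℝ,
          (sphericalRealWeight (2 * n) α₁ α₂ g : ℂ) *
            (z • (1 : Matrix (Fin (2 * n)) (Fin (2 * n)) ℂ)
              - (Matrix.of g).map ((↑) : ℝ → ℂ)).det) /
        ((∫ g : Fin (2 * n) → Fin (2 * n) → ℝ, sphericalRealWeight (2 * n) α₁ α₂ g : ℝ) : ℂ))
      + (∫ g : Fin (2 * n) → Fin (2 * n) → ℝ,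
          (sphericalRealWeight (2 * n) α₁ α₂ g : ℂ) *
            ((z • (1 : Matrix (Fin (2 * n)) (Fin (2 * n)) ℂ)
              - (Matrix.of g).map ((↑) : ℝ → ℂ)).det * ((Matrix.of g).trace : ℂ))) /
        ((∫ g : Fin (2 * n) → Fin (2 * n) → ℝ, sphericalRealWeight (2 * n) α₁ α₂ g : ℝ) : ℂ)
      = z ^ (2 * n + 1) - z ^ (2 * n - 1) *
          (((α₁ + n) / (α₂ - (2 * n + α₁ + 1 / 2)) : ℝ) : ℂ) := by
  have hab : α₁ + 3 * (2 * n : ℕ) / 2 + 1 < α₂ := by push_cast; linarith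
  have hn1 : (1 : ℝ) ≤ n := by exact_mod_cast hn
  have hpos := integral_sphericalRealWeight_pos (N := 2 * n) (b := α₂) hα₁
    (by push_cast; linarith)
  have hc : ((∫ g, sphericalRealWeight (2 * n) α₁ α₂ g : ℝ) : ℂ) ≠ 0 :=
    Complex.ofReal_ne_zero.mpr hpos.ne'
  have htr := integral_det_mul_trace (N := 2 * n) (by lia) hα₁ hab z
  have hdet := integral_det (N := 2 * n) hα₁ hab z
  simp only [truncatedCharmatrix, Finset.mem_univ, if_true, Complex.real_smul] at htr hdet
  have hratio : ((2 * n : ℕ) + 2 * α₁) / (2 * α₂ - 2 * α₁ - 2 * (2 * n : ℕ) - 1) =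
      (α₁ + n) / (α₂ - (2 * n + α₁ + 1 / 2)) := by
    push_cast
    rw [div_eq_div_iff (by linarith) (by linarith)]
    ring
  rw [hratio, Complex.ofReal_mul, ← mul_assoc] at htr
  rw [htr, hdet, mul_div_cancel_right₀ _ hc, mul_div_cancel_right₀ _ hc]
  exact ⟨rfl, by ring⟩
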